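/- Let q ≥ 4, let B be a Baer subplane of PG(2,q²) tangent to ℓ∞ at T̄ = B ∩ ℓ∞, let m be a line of B through T̄, and let P̄ ∈ ℓ∞ with P̄ ≠ T̄. Then there exist q ℓ∞-Baer pencils with vertex P̄ whose affine point sets partition the affine points of PG(2,q²), and which partition the affine points of B into the affine points of q−1 F_q-conics contained in B and containing T̄ together with the affine points of the two lines m and m_P of B, where m_P is the unique line of B whose extension contains P̄. Moreover, for each of these q−1 F_q-conics C, the unique F_{q²}-conic C⁺ containing C passes through the point P̄. -/

import Mathlib

open scoped Classical
open Matrix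

noncomputable section

namespace BaerConics

/-- Points of the projective space `PG(n-1, K)` as projectivization of `Fin n → K`. -/
abbrev PP (K : Type) [Field K] (n : ℕ) : Type := Projectivization K (Fin n → K)

variable {K : Type} [Field K] {m n : ℕ}

/-- The (at most one) projective point determined by a vector:  empty if `v = 0`,
and the singleton `{[v]}` otherwise. -/
def projPt (v : Fin n → K) : Set (PP K n) :=
  {p | ∃ h : v ≠ 0, p = Projectivization.mk K v h}

/-- The set of projective points lying in a linear subspace. -/
def ptsOf (W : Submodule K (Fin n → K)) : Set (PP K n) :=
  {p | p.rep ∈ W}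

/-- The projective line through two points (as the set of points of the span). -/
def lineTh (P Q : PP K n) : Set (PP K n) :=
  ptsOf (Submodule.span K {P.rep, Q.rep})

/-- `X` is a projective flat of projective dimension `d`. -/
def IsFlat (d : ℕ) (X : Set (PP K n)) : Prop :=
  ∃ W : Submodule K (Fin n → K), Module.finrank K W = d + 1 ∧ X = ptsOf W

/-- Image of a set of vectors under the projective map induced by a matrix. -/
def mimg (M : Matrix (Fin m) (Fin n) K) (X : Set (Fin n → K)) : Set (PP K m) :=
  {p | ∃ v ∈ X, p ∈ projPt (M.mulVec v)}

/-- Coordinatewise application of a ring homomorphism to a vector. -/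
def mapVec {L : Type} [Field L] (σ : K →+* L) (v : Fin n → K) : Fin n → L :=
  fun i => σ (v i)

lemma mulVec_inj (M : Matrix (Fin n) (Fin n) K) (hM : IsUnit M.det) :
    Function.Injective M.mulVec := by
  intro a b hab
  have h := congrArg (fun v => M⁻¹.mulVec v) hab
  simpa [Matrix.mulVec_mulVec, Matrix.nonsing_inv_mul M hM] using h

/-- The projective transformation induced by an invertible matrix. -/
def pmap (M : Matrix (Fin n) (Fin n) K) (hM : IsUnit M.det) (p : PP K n) : PP K n :=
  Projectivization.mk K (M.mulVec p.rep) (by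
    intro h
    apply p.rep_nonzero
    have h0 : M.mulVec p.rep = M.mulVec 0 := by simpa [Matrix.mulVec_zero] using h
    exact mulVec_inj M hM h0)

/-- The map induced on projective points by the coordinatewise `q`-power map. -/
def frobPt (q : ℕ) (p : PP K n) : PP K n :=
  Projectivization.mk K (fun i => p.rep i ^ q) (by
    obtain ⟨i, hi⟩ := Function.ne_iff.mp p.rep_nonzero
    intro h
    exact pow_ne_zero q (by simpa using hi) (by simpa using congrFun h i))

/-- The line at infinity `z = 0` of `PG(2, K)`. -/
def linf (K : Type) [Field K] : Set (PP K 3) := {p | p.rep 2 = 0}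

/-- Coordinatewise application of the algebra map to a vector. -/
def algVec (F : Type) {K : Type} [Field F] [Field K] [Algebra F K] {n : ℕ}
    (v : Fin n → F) : Fin n → K := fun i => algebraMap F K (v i)

/-- Vectors representing the points of the standard Baer subline of `ℓ∞`. -/
def sublineVecs (F K : Type) [Field F] [Field K] [Algebra F K] : Set (Fin 3 → K) :=
  {v | ∃ θ : F, v = ![algebraMap F K θ, 1, 0]} ∪ {![1, 0, 0]}

/-- Nonzero vectors representing the points of `ℓ∞`. -/
def linfVecs (K : Type) [Field K] : Set (Fin 3 → K) := {v | v ≠ 0 ∧ v 2 = 0}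

/-- Vectors with all coordinates in (the image of) `F`, representing the canonical
Baer subplane. -/
def subplaneVecs (F K : Type) [Field F] [Field K] [Algebra F K] : Set (Fin 3 → K) :=
  {v | ∃ w : Fin 3 → F, w ≠ 0 ∧ v = algVec F w}

/-- Vectors of the standard conic with parameters in `S`. -/
def conicVecs {K : Type} [Field K] (S : Set K) : Set (Fin 3 → K) :=
  {v | ∃ θ ∈ S, v = ![1, θ, θ ^ 2]} ∪ {![0, 0, 1]}

/-- `b` is a Baer subline of the line `ℓ` of `PG(2,q²)`. -/
def IsBaerSublineOf (F : Type) {K : Type} [Field F] [Field K] [Algebra F K]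
    (b ℓ : Set (PP K 3)) : Prop :=
  ∃ M : Matrix (Fin 3) (Fin 3) K, IsUnit M.det ∧
    ℓ = mimg M (linfVecs K) ∧ b = mimg M (sublineVecs F K)

/-- `B` is a Baer subplane of `PG(2,q²)`. -/
def IsBaerSubplane (F : Type) {K : Type} [Field F] [Field K] [Algebra F K]
    (B : Set (PP K 3)) : Prop :=
  ∃ M : Matrix (Fin 3) (Fin 3) K, IsUnit M.det ∧ B = mimg M (subplaneVecs F K)

/-- `C` is the image under `PGL(3,K)` of the standard conic with parameters in `S`. -/
def IsConicOver {K : Type} [Field K] (S : Set K) (C : Set (PP K 3)) : Prop :=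
  ∃ M : Matrix (Fin 3) (Fin 3) K, IsUnit M.det ∧ C = mimg M (conicVecs S)

/-- An `F_q`-conic of `PG(2,q²)`: a nondegenerate conic of a Baer subplane. -/
def IsFqConic (F : Type) {K : Type} [Field F] [Field K] [Algebra F K]
    (C : Set (PP K 3)) : Prop :=
  IsConicOver (Set.range (algebraMap F K)) C

/-- An `F_{q²}`-conic of `PG(2,q²)`: a nondegenerate conic. -/
def IsFq2Conic {K : Type} [Field K] (C : Set (PP K 3)) : Prop :=
  IsConicOver (Set.univ : Set K) C

/-- `𝒦` is an `ℓ∞`-Baer pencil with vertex `P`. -/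
def IsLinfBaerPencil (F : Type) {K : Type} [Field F] [Field K] [Algebra F K]
    (𝒦 : Set (PP K 3)) (P : PP K 3) : Prop :=
  P ∈ linf K ∧ ∃ ℓ b : Set (PP K 3), IsBaerSublineOf F b ℓ ∧ P ∉ ℓ ∧
    (∃! X, X ∈ b ∩ linf K) ∧ 𝒦 = ⋃ X ∈ b, lineTh P X

/-- `m` is a line of the Baer subplane `B`, with extension (full line) `ℓ`. -/
def IsLineOfExt {K : Type} [Field K] (q : ℕ) (B m ℓ : Set (PP K 3)) : Prop :=
  IsFlat 1 ℓ ∧ m = B ∩ ℓ ∧ m.ncard = q + 1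

/-- `m` is a line of the Baer subplane `B`. -/
def IsLineOf {K : Type} [Field K] (q : ℕ) (B m : Set (PP K 3)) : Prop :=
  ∃ ℓ, IsLineOfExt q B m ℓ

/-- `P` and `Q` are conjugate with respect to the Baer subline `b` of `ℓ∞`. -/
def ConjWrtSubline (F : Type) {K : Type} [Field F] [Field K] [Algebra F K]
    (q : ℕ) (b : Set (PP K 3)) (P Q : PP K 3) : Prop :=
  ∃ (M : Matrix (Fin 3) (Fin 3) K) (hM : IsUnit M.det),
    mimg M (linfVecs K) = linf K ∧ b = mimg M (sublineVecs F K) ∧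
    ∃ P₀ : PP K 3, P = pmap M hM P₀ ∧ Q = pmap M hM (frobPt q P₀)

/-- A representative vector for the point `(δ,1,0)` (resp. `(1,0,0)`) of `ℓ∞`. -/
def ptInfVec {K : Type} [Field K] : Option K → Fin 3 → K
  | some δ => ![δ, 1, 0]
  | none => ![1, 0, 0]

lemma ptInfVec_ne {K : Type} [Field K] (t : Option K) : ptInfVec t ≠ 0 := by
  cases t with
  | none => intro h; have h0 := congrFun h 0; simp [ptInfVec] at h0
  | some δ => intro h; have h0 := congrFun h 1; simp [ptInfVec] at h0

/-- The point of `ℓ∞` with parameter `δ ∈ K ∪ {∞}`. -/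
def ptInf {K : Type} [Field K] (t : Option K) : PP K 3 :=
  Projectivization.mk K (ptInfVec t) (ptInfVec_ne t)

/-- The hyperplane at infinity `z = 0` of `PG(4, F)`. -/
def sinf (F : Type) [Field F] : Set (PP F 5) := {p | p.rep 4 = 0}

/-- Affine coordinates of the Bruck-Bose image of an affine point of `PG(2,q²)`. -/
def bbVec {F K : Type} [Field F] [Field K] (c0 c1 : K → F) (p : PP K 3) : Fin 5 → F :=
  ![c0 (p.rep 0 / p.rep 2), c1 (p.rep 0 / p.rep 2),
    c0 (p.rep 1 / p.rep 2), c1 (p.rep 1 / p.rep 2), 1]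

/-- The Bruck-Bose map (meaningful on affine points of `PG(2,q²)`). -/
def bb {F K : Type} [Field F] [Field K] (c0 c1 : K → F) (p : PP K 3) : PP F 5 :=
  Projectivization.mk F (bbVec c0 c1 p) (by
    intro h
    have h4 := congrFun h 4
    simp [bbVec] at h4)

/-- First spanning vector of the spread line with parameter `δ ∈ K ∪ {∞}`. -/
def spreadV1 {F K : Type} [Field F] [Field K] (c0 c1 : K → F) : Option K → Fin 5 → F
  | some δ => ![c0 δ, c1 δ, 1, 0, 0]
  | none => ![1, 0, 0, 0, 0]

/-- Second spanning vector of the spread line with parameter `δ ∈ K ∪ {∞}`. -/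
def spreadV2 {F K : Type} [Field F] [Field K] (c0 c1 : K → F) (t0 t1 : F) :
    Option K → Fin 5 → F
  | some δ => ![t0 * c1 δ, c0 δ + t1 * c1 δ, 0, 1, 0]
  | none => ![0, 1, 0, 0, 0]

/-- The line of the regular spread `S` with parameter `δ ∈ K ∪ {∞}`. -/
def spreadLine {F K : Type} [Field F] [Field K] (c0 c1 : K → F) (t0 t1 : F)
    (t : Option K) : Set (PP F 5) :=
  ptsOf (Submodule.span F {spreadV1 c0 c1 t, spreadV2 c0 c1 t0 t1 t})

/-- The extension `[T]⋆` of a spread line to `PG(4,q²)`. -/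
def extSpreadLine (F : Type) {K : Type} [Field F] [Field K] [Algebra F K]
    (c0 c1 : K → F) (t0 t1 : F) (t : Option K) : Set (PP K 5) :=
  ptsOf (Submodule.span K
    {algVec F (spreadV1 c0 c1 t), algVec F (spreadV2 c0 c1 t0 t1 t)})

/-- The `K`-extension of an `F`-subspace. -/
def extSub (F : Type) {K : Type} [Field F] [Field K] [Algebra F K] {n : ℕ}
    (W : Submodule F (Fin n → F)) : Submodule K (Fin n → K) :=
  Submodule.span K (algVec F '' (W : Set (Fin n → F)))

def A0v {K : Type} [Field K] (τ : K) (q : ℕ) : Fin 5 → K := ![τ ^ q, -1, 0, 0, 0]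
def A1v {K : Type} [Field K] (τ : K) (q : ℕ) : Fin 5 → K := ![0, 0, τ ^ q, -1, 0]
def B0v {K : Type} [Field K] (τ : K) : Fin 5 → K := ![τ, -1, 0, 0, 0]
def B1v {K : Type} [Field K] (τ : K) : Fin 5 → K := ![0, 0, τ, -1, 0]

/-- The transversal line `g` of the regular spread, in `PG(4,q²)`. -/
def gline {K : Type} [Field K] (τ : K) (q : ℕ) : Set (PP K 5) :=
  ptsOf (Submodule.span K {A0v τ q, A1v τ q})

/-- The conjugate transversal line `g^q` of the regular spread, in `PG(4,q²)`. -/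
def gqline {K : Type} [Field K] (τ : K) : Set (PP K 5) :=
  ptsOf (Submodule.span K {B0v τ, B1v τ})

/-- Representative vector of the point `T = δA₀ + A₁` of `g`. -/
def gptVec {K : Type} [Field K] (τ : K) (q : ℕ) : Option K → Fin 5 → K
  | some δ => δ • A0v τ q + A1v τ q
  | none => A0v τ q

/-- Representative vector of the conjugate point `T^q = δ^q A₀^q + A₁^q` of `g^q`. -/
def gqptVec {K : Type} [Field K] (τ : K) (q : ℕ) : Option K → Fin 5 → K
  | some δ => δ ^ q • B0v τ + B1v τ
  | none => B0v τ

lemma gptVec_ne {K : Type} [Field K] (τ : K) (q : ℕ) (t : Option K) :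
    gptVec τ q t ≠ 0 := by
  cases t with
  | none =>
      intro h
      have := congrFun h 1
      simp [gptVec, A0v] at this
  | some δ =>
      intro h
      have := congrFun h 3
      simp [gptVec, A0v, A1v] at this

lemma gqptVec_ne {K : Type} [Field K] (τ : K) (q : ℕ) (t : Option K) :
    gqptVec τ q t ≠ 0 := by
  cases t with
  | none =>
      intro h
      have := congrFun h 1
      simp [gqptVec, B0v] at this
  | some δ =>
      intro h
      have := congrFun h 3
      simp [gqptVec, B0v, B1v] at this

/-- The point of `g` corresponding to the point of `ℓ∞` with parameter `δ ∈ K ∪ {∞}`. -/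
def gpt {K : Type} [Field K] (τ : K) (q : ℕ) (t : Option K) : PP K 5 :=
  Projectivization.mk K (gptVec τ q t) (gptVec_ne τ q t)

/-- The point of `g^q` conjugate to `gpt τ q t`. -/
def gqpt {K : Type} [Field K] (τ : K) (q : ℕ) (t : Option K) : PP K 5 :=
  Projectivization.mk K (gqptVec τ q t) (gqptVec_ne τ q t)

/-- Evaluation of the quadratic form with matrix `M` at `v`. -/
def qeval {K : Type} [Field K] {n : ℕ} (M : Matrix (Fin n) (Fin n) K) (v : Fin n → K) : K :=
  v ⬝ᵥ M.mulVec v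

/-- Vectors of the standard twisted cubic (inside the hyperplane `x₄ = 0`)
with parameters in `S`. -/
def tcVecs {K : Type} [Field K] (S : Set K) : Set (Fin 5 → K) :=
  {v | ∃ θ ∈ S, v = ![1, θ, θ ^ 2, θ ^ 3, 0]} ∪ {![0, 0, 0, 1, 0]}

/-- Vectors of the standard 4-dimensional normal rational curve with parameters in `S`. -/
def nrcVecs {K : Type} [Field K] (S : Set K) : Set (Fin 5 → K) :=
  {v | ∃ θ ∈ S, v = ![1, θ, θ ^ 2, θ ^ 3, θ ^ 4]} ∪ {![0, 0, 0, 0, 1]}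

/-- `R` is a regulus of `Σ∞` in `PG(4,q)`. -/
def IsRegulus {F : Type} [Field F] (q : ℕ) (R : Set (Set (PP F 5))) : Prop :=
  R.ncard = q + 1 ∧
  (∀ ℓ ∈ R, IsFlat 1 ℓ ∧ ℓ ⊆ sinf F) ∧
  (∀ ℓ ∈ R, ∀ ℓ' ∈ R, ℓ ≠ ℓ' → ℓ ∩ ℓ' = ∅) ∧
  (∀ mℓ : Set (PP F 5), IsFlat 1 mℓ → mℓ ⊆ sinf F →
    (∃ ℓ₁ ∈ R, ∃ ℓ₂ ∈ R, ∃ ℓ₃ ∈ R, ℓ₁ ≠ ℓ₂ ∧ ℓ₁ ≠ ℓ₃ ∧ ℓ₂ ≠ ℓ₃ ∧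
      (mℓ ∩ ℓ₁).Nonempty ∧ (mℓ ∩ ℓ₂).Nonempty ∧ (mℓ ∩ ℓ₃).Nonempty) →
    ∀ ℓ ∈ R, (mℓ ∩ ℓ).Nonempty)

/-!
Choose coordinates `(x, y, z)` in which `B` is the canonical Baer subplane, `T = (0, 0, 1)`, the
line `m` is `x = 0`, the line at infinity is `x = ε y` with `ε ∈ K \ F`, and `P = (ε, 1, 0)`; the
last condition can be reached by a shear over `F` because `K = F ⊕ F ε`. Let `δ = t - ε` be the
conjugate of `ε` and `Q = (x - ε y) (x - δ y) = x² - t x y + n y²`.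

An affine point lies on a line through `P` determined by the value of `z / (x - ε y)`, and the
pencils are `z / (x - ε y) ∈ c + F δ` for `c ∈ F`. They partition the affine points because
`K = F ⊕ F δ`. On `B`, multiplying by the conjugate `x - δ y` and comparing components turns
membership into `z x = c Q`. For `c = 0` this is the union of the lines `x = 0` and `z = 0` of `B`,
the latter extending to a line through `P`. For `c ≠ 0` it is a conic through `T` whose extension
contains `P`, because `Q` vanishes at `(ε, 1, 0)`. The extension is unique because a quadratic form
pulls back to a quartic along a parametrised conic, and `q + 1 ≥ 5` zeros make it vanish.
-/

lemma existsUnique_mem_image_univ {ι α : Type*} [Fintype ι] {f : ι → Set α} {x : α}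
    (h : ∃! i, x ∈ f i) : ∃! S, S ∈ Finset.univ.image f ∧ x ∈ S := by
  obtain ⟨i, hi, huniq⟩ := h
  refine ⟨f i, ⟨Finset.mem_image_of_mem f (Finset.mem_univ i), hi⟩, ?_⟩
  rintro _ ⟨hS, hx⟩
  obtain ⟨j, -, rfl⟩ := Finset.mem_image.1 hS
  rw [huniq j hx]

section Coordinates

lemma mem_projPt_iff {v : Fin n → K} {p : PP K n} :
    p ∈ projPt v ↔ ∃ k : K, k ≠ 0 ∧ p.rep = k • v := by
  constructor
  · rintro ⟨hv, rfl⟩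
    obtain ⟨k, hk⟩ := Projectivization.exists_smul_eq_mk_rep K v hv
    exact ⟨k, k.ne_zero, hk.symm⟩
  · rintro ⟨k, -, hp⟩
    have hv : v ≠ 0 := by
      rintro rfl
      exact p.rep_nonzero (by rw [hp, smul_zero])
    refine ⟨hv, ?_⟩
    rw [← p.mk_rep, Projectivization.mk_eq_mk_iff']
    exact ⟨k, hp.symm⟩

lemma projPt_smul {k : K} (hk : k ≠ 0) (v : Fin n → K) : projPt (k • v) = projPt v := by
  ext p
  simp only [mem_projPt_iff, smul_smul]
  constructor
  · rintro ⟨l, hl, hp⟩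
    exact ⟨l * k, mul_ne_zero hl hk, hp⟩
  · rintro ⟨l, hl, hp⟩
    exact ⟨l / k, div_ne_zero hl hk, by rw [hp, div_mul_cancel₀ l hk]⟩

lemma eq_of_mem_projPt {v : Fin n → K} {p p' : PP K n} (hp : p ∈ projPt v)
    (hp' : p' ∈ projPt v) : p = p' := by
  obtain ⟨_, rfl⟩ := hp
  obtain ⟨_, rfl⟩ := hp'
  rfl

lemma mem_ptsOf_iff {W : Submodule K (Fin n → K)} {v : Fin n → K} {p : PP K n}
    (hp : p ∈ projPt v) : p ∈ ptsOf W ↔ v ∈ W := by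
  obtain ⟨k, hk, hp⟩ := mem_projPt_iff.1 hp
  rw [ptsOf, Set.mem_ofPred_eq, hp, W.smul_mem_iff hk]

lemma lineTh_eq_ptsOf_span {a b : Fin n → K} {P Q : PP K n} (hP : P ∈ projPt a)
    (hQ : Q ∈ projPt b) : lineTh P Q = ptsOf (Submodule.span K {a, b}) := by
  obtain ⟨k, hk, hP⟩ := mem_projPt_iff.1 hP
  obtain ⟨l, hl, hQ⟩ := mem_projPt_iff.1 hQ
  rw [lineTh, hP, hQ, Submodule.span_insert, Submodule.span_insert,
    Submodule.span_singleton_smul_eq hk.isUnit, Submodule.span_singleton_smul_eq hl.isUnit]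

lemma linearIndependent_rep_pair {P Q : PP K n} (hPQ : P ≠ Q) :
    LinearIndependent K ![P.rep, Q.rep] := by
  have hrep : Projectivization.rep ∘ ![P, Q] = ![P.rep, Q.rep] := by
    ext i : 1
    fin_cases i <;> rfl
  rwa [← Projectivization.independent_pair_iff_ne, Projectivization.independent_iff, hrep] at hPQ

lemma finrank_span_rep_pair {P Q : PP K n} (hPQ : P ≠ Q) :
    Module.finrank K (Submodule.span K {P.rep, Q.rep}) = 2 := by
  rw [← Matrix.range_cons_cons_empty, finrank_span_eq_card (linearIndependent_rep_pair hPQ),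
    Fintype.card_fin]

lemma isFlat_lineTh {P Q : PP K n} (hPQ : P ≠ Q) : IsFlat 1 (lineTh P Q) :=
  ⟨_, finrank_span_rep_pair hPQ, rfl⟩

lemma IsFlat.eq_lineTh {ℓ : Set (PP K n)} (hℓ : IsFlat 1 ℓ) {P Q : PP K n} (hP : P ∈ ℓ)
    (hQ : Q ∈ ℓ) (hPQ : P ≠ Q) : ℓ = lineTh P Q := by
  obtain ⟨W, hW, rfl⟩ := hℓ
  have hle : Submodule.span K {P.rep, Q.rep} ≤ W :=
    Submodule.span_le.2 (Set.pair_subset hP hQ)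
  rw [lineTh, Submodule.eq_of_le_of_finrank_eq hle (by rw [finrank_span_rep_pair hPQ, hW])]

lemma mimg_mono (N : Matrix (Fin m) (Fin n) K) {X Y : Set (Fin n → K)} (h : X ⊆ Y) :
    mimg N X ⊆ mimg N Y := by
  rintro p ⟨v, hv, hp⟩
  exact ⟨v, h hv, hp⟩

variable {N : Matrix (Fin n) (Fin n) K} {v w : Fin n → K} {p : PP K n}

lemma ne_zero_of_mem_projPt_mulVec (hp : p ∈ projPt (N *ᵥ v)) : v ≠ 0 := by
  rintro rfl
  obtain ⟨h, -⟩ := hp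
  exact h (Matrix.mulVec_zero N)

lemma mulVec_ne_zero (hN : IsUnit N.det) (hv : v ≠ 0) : N *ᵥ v ≠ 0 := fun h =>
  hv (mulVec_inj N hN (h.trans (Matrix.mulVec_zero N).symm))

lemma projPt_mulVec_nonempty (hN : IsUnit N.det) (hv : v ≠ 0) :
    (projPt (N *ᵥ v)).Nonempty :=
  ⟨_, mulVec_ne_zero hN hv, rfl⟩

lemma exists_mem_projPt_mulVec (hN : IsUnit N.det) (p : PP K n) :
    ∃ v, p ∈ projPt (N *ᵥ v) := by
  refine ⟨N⁻¹ *ᵥ p.rep, mem_projPt_iff.2 ⟨1, one_ne_zero, ?_⟩⟩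
  rw [Matrix.mulVec_mulVec, Matrix.mul_nonsing_inv N hN, Matrix.one_mulVec, one_smul]

lemma exists_smul_of_mem_projPt_mulVec (hN : IsUnit N.det) (hv : p ∈ projPt (N *ᵥ v))
    (hw : p ∈ projPt (N *ᵥ w)) : ∃ k : K, k ≠ 0 ∧ v = k • w := by
  obtain ⟨k, hk, hpv⟩ := mem_projPt_iff.1 hv
  obtain ⟨l, hl, hpw⟩ := mem_projPt_iff.1 hw
  refine ⟨k⁻¹ * l, mul_ne_zero (inv_ne_zero hk) hl, mulVec_inj N hN ?_⟩
  rw [Matrix.mulVec_smul, mul_smul, ← hpw, hpv, inv_smul_smul₀ hk]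

lemma mem_lineTh_mulVec_iff (hN : IsUnit N.det) {a b : Fin n → K} {P Q : PP K n}
    (hP : P ∈ projPt (N *ᵥ a)) (hQ : Q ∈ projPt (N *ᵥ b)) (hp : p ∈ projPt (N *ᵥ v)) :
    p ∈ lineTh P Q ↔ ∃ s t : K, s • a + t • b = v := by
  rw [lineTh_eq_ptsOf_span hP hQ, mem_ptsOf_iff hp, Submodule.mem_span_pair]
  simp only [← Matrix.mulVec_smul, ← Matrix.mulVec_add, (mulVec_inj N hN).eq_iff]

lemma mem_linf_iff {v : Fin 3 → K} {p : PP K 3} (hp : p ∈ projPt v) :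
    p ∈ linf K ↔ v 2 = 0 := by
  obtain ⟨k, hk, hp⟩ := mem_projPt_iff.1 hp
  simp [linf, hp, hk]

end Coordinates

section QuadraticExtension

variable {F : Type} [Field F] [Algebra F K] {ε : K}

lemma encard_range_algebraMap [Fintype F] :
    (Set.range (algebraMap F K)).encard = Fintype.card F := by
  rw [← Set.image_univ, (algebraMap F K).injective.encard_image, Set.encard_univ,
    ENat.card_eq_coe_fintype_card]

lemma finrank_eq_two_of_card_eq_sq [Fintype F] [Fintype K]
    (h : Fintype.card K = Fintype.card F ^ 2) : Module.finrank F K = 2 :=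
  Nat.pow_right_injective (Fintype.one_lt_card (α := F))
    ((Module.card_eq_pow_finrank (K := F) (V := K)).symm.trans h)

lemma linearIndependent_one_pair (hε : ε ∉ Set.range (algebraMap F K)) :
    LinearIndependent F ![1, ε] := by
  rw [LinearIndependent.pair_iff' one_ne_zero]
  rintro a rfl
  exact hε ⟨a, Algebra.algebraMap_eq_smul_one a⟩

lemma eq_zero_and_eq_zero_of_add_mul_eq_zero (hε : ε ∉ Set.range (algebraMap F K)) {a b : F}
    (h : algebraMap F K a + algebraMap F K b * ε = 0) : a = 0 ∧ b = 0 := by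
  have hli := linearIndependent_one_pair hε
  rw [LinearIndependent.pair_iff] at hli
  refine hli a b ?_
  rwa [← Algebra.algebraMap_eq_smul_one, Algebra.smul_def]

lemma exists_add_mul_eq (hrank : Module.finrank F K = 2) (hε : ε ∉ Set.range (algebraMap F K))
    (x : K) : ∃ a b : F, algebraMap F K a + algebraMap F K b * ε = x := by
  have : FiniteDimensional F K := Module.finite_of_finrank_eq_succ hrank
  have hspan : Submodule.span F {1, ε} = ⊤ := by
    rw [← Matrix.range_cons_cons_empty]
    exact (linearIndependent_one_pair hε).span_eq_top_of_card_eq_finrank'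
      (by rw [Fintype.card_fin, hrank])
  have hx : x ∈ Submodule.span F {1, ε} := by rw [hspan]; exact Submodule.mem_top
  obtain ⟨a, b, h⟩ := Submodule.mem_span_pair.1 hx
  exact ⟨a, b, by rw [← h, ← Algebra.algebraMap_eq_smul_one, Algebra.smul_def]⟩

lemma existsUnique_exists_add_mul_eq (hrank : Module.finrank F K = 2)
    (hε : ε ∉ Set.range (algebraMap F K)) (x : K) :
    ∃! a : F, ∃ b : F, algebraMap F K a + algebraMap F K b * ε = x := by
  refine existsUnique_of_exists_of_unique (exists_add_mul_eq hrank hε x) ?_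
  rintro a a' ⟨b, h⟩ ⟨b', h'⟩
  refine sub_eq_zero.1 (eq_zero_and_eq_zero_of_add_mul_eq_zero hε (b := b - b') ?_).1
  rw [map_sub, map_sub]
  linear_combination h - h'

lemma exists_mul_sub_eq (hrank : Module.finrank F K = 2)
    (hε : ε ∉ Set.range (algebraMap F K)) :
    ∃ t n : F, ε * (algebraMap F K t - ε) = algebraMap F K n := by
  obtain ⟨a, t, h⟩ := exists_add_mul_eq hrank hε (ε ^ 2)
  refine ⟨t, -a, ?_⟩
  rw [map_neg]
  linear_combination h

lemma sub_notMem_range (hε : ε ∉ Set.range (algebraMap F K)) (t : F) :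
    algebraMap F K t - ε ∉ Set.range (algebraMap F K) := by
  rintro ⟨a, ha⟩
  exact hε ⟨t - a, by rw [map_sub, ha, sub_sub_cancel]⟩

lemma sub_mul_ne_zero (hε : ε ∉ Set.range (algebraMap F K)) {x y : F} (hxy : x ≠ 0 ∨ y ≠ 0) :
    algebraMap F K x - ε * algebraMap F K y ≠ 0 := by
  intro h
  obtain ⟨hx, hy⟩ := eq_zero_and_eq_zero_of_add_mul_eq_zero hε (a := x) (b := -y)
    (by rw [map_neg]; linear_combination h)
  exact hxy.elim (· hx) (· (neg_eq_zero.1 hy))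

section NormForm

variable {t n : F}

lemma algebraMap_normForm (hn : ε * (algebraMap F K t - ε) = algebraMap F K n) (x y : F) :
    algebraMap F K (x ^ 2 - t * x * y + n * y ^ 2) =
      (algebraMap F K x - ε * algebraMap F K y) *
        (algebraMap F K x - (algebraMap F K t - ε) * algebraMap F K y) := by
  simp only [map_add, map_sub, map_mul, map_pow, ← hn]
  ring

lemma normForm_ne_zero (hε : ε ∉ Set.range (algebraMap F K))
    (hn : ε * (algebraMap F K t - ε) = algebraMap F K n) {x y : F} (hxy : x ≠ 0 ∨ y ≠ 0) :
    x ^ 2 - t * x * y + n * y ^ 2 ≠ 0 := by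
  intro h
  have h0 := algebraMap_normForm hn x y
  rw [h, map_zero, eq_comm, mul_eq_zero] at h0
  exact h0.elim (sub_mul_ne_zero hε hxy) (sub_mul_ne_zero (sub_notMem_range hε t) hxy)

-- Multiply by the conjugate factor `x - δ y` and compare the components in `K = F ⊕ F δ`.
lemma exists_eq_mul_sub_iff (hε : ε ∉ Set.range (algebraMap F K))
    (hn : ε * (algebraMap F K t - ε) = algebraMap F K n) {x y : F} (hxy : x ≠ 0 ∨ y ≠ 0)
    (c z : F) :
    (∃ s : F, algebraMap F K z =
        (algebraMap F K c + algebraMap F K s * (algebraMap F K t - ε)) *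
          (algebraMap F K x - ε * algebraMap F K y)) ↔
      z * x = c * (x ^ 2 - t * x * y + n * y ^ 2) := by
  set Q := x ^ 2 - t * x * y + n * y ^ 2 with hQ
  have hfactor := algebraMap_normForm hn x y
  rw [← hQ] at hfactor
  constructor
  · rintro ⟨s, hz⟩
    refine sub_eq_zero.1 (eq_zero_and_eq_zero_of_add_mul_eq_zero (sub_notMem_range hε t)
      (b := -(z * y + s * Q)) ?_).1
    simp only [map_sub, map_neg, map_add, map_mul]
    linear_combination
      (algebraMap F K x - (algebraMap F K t - ε) * algebraMap F K y) * hz -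
        (algebraMap F K c + algebraMap F K s * (algebraMap F K t - ε)) * hfactor
  · intro hzx
    have hQ0 : algebraMap F K Q ≠ 0 := by
      simpa only [ne_eq, map_eq_zero] using normForm_ne_zero hε hn hxy
    have hzx' := congrArg (algebraMap F K) hzx
    simp only [map_mul] at hzx'
    refine ⟨-(z * y) / Q,
      mul_right_cancel₀ (sub_mul_ne_zero (sub_notMem_range hε t) hxy) ?_⟩
    rw [mul_assoc, ← hfactor, map_div₀, map_neg, map_mul, add_mul, mul_right_comm _ _ (_ : K),
      div_mul_cancel₀ _ hQ0]
    linear_combination hzx'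

end NormForm

end QuadraticExtension

section BaerSubplane

variable {F : Type} [Field F] [Algebra F K] {N : Matrix (Fin 3) (Fin 3) K}
  {E : Matrix (Fin 3) (Fin 3) F} {w : Fin 3 → F} {p : PP K 3}

lemma algVec_vec3 (a b c : F) :
    algVec F ![a, b, c] = ![algebraMap F K a, algebraMap F K b, algebraMap F K c] := by
  ext i
  fin_cases i <;> rfl

lemma algVec_smul (a : F) (w : Fin 3 → F) :
    (algVec F (a • w) : Fin 3 → K) = algebraMap F K a • algVec F w :=
  funext fun i => map_mul (algebraMap F K) a (w i)

lemma mul_map_mulVec_algVec (N : Matrix (Fin 3) (Fin 3) K) (E : Matrix (Fin 3) (Fin 3) F)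
    (w : Fin 3 → F) :
    (N * E.map (algebraMap F K)) *ᵥ algVec F w = N *ᵥ algVec F (E *ᵥ w) := by
  have hE : E.map (algebraMap F K) *ᵥ algVec F w = algVec F (E *ᵥ w) :=
    funext fun i => ((algebraMap F K).map_mulVec E w i).symm
  rw [← Matrix.mulVec_mulVec, hE]

lemma isUnit_det_mul_map (hN : IsUnit N.det) (hE : IsUnit E.det) :
    IsUnit (N * E.map (algebraMap F K)).det := by
  rw [Matrix.det_mul, ← RingHom.mapMatrix_apply, ← RingHom.map_det]
  exact hN.mul (hE.map _)

lemma mem_mimg_subplaneVecs_iff :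
    p ∈ mimg N (subplaneVecs F K) ↔ ∃ w : Fin 3 → F, p ∈ projPt (N *ᵥ algVec F w) := by
  constructor
  · rintro ⟨_, ⟨w, -, rfl⟩, hp⟩
    exact ⟨w, hp⟩
  · rintro ⟨w, hp⟩
    refine ⟨_, ⟨w, ?_, rfl⟩, hp⟩
    rintro rfl
    exact ne_zero_of_mem_projPt_mulVec hp (funext fun _ => map_zero _)

lemma mimg_mul_map_subplaneVecs (N : Matrix (Fin 3) (Fin 3) K) (hE : IsUnit E.det) :
    mimg (N * E.map (algebraMap F K)) (subplaneVecs F K) = mimg N (subplaneVecs F K) := by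
  ext p
  simp only [mem_mimg_subplaneVecs_iff, mul_map_mulVec_algVec]
  constructor
  · rintro ⟨w, hp⟩
    exact ⟨_, hp⟩
  · rintro ⟨w, hp⟩
    refine ⟨E⁻¹ *ᵥ w, ?_⟩
    rwa [Matrix.mulVec_mulVec, Matrix.mul_nonsing_inv E hE, Matrix.one_mulVec]

lemma mem_mimg_sublineVecs_iff (hN : IsUnit N.det) (hp : p ∈ projPt (N *ᵥ algVec F w)) :
    p ∈ mimg N (sublineVecs F K) ↔ w 2 = 0 := by
  constructor
  · rintro ⟨v, hv, hpv⟩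
    obtain ⟨k, -, hk⟩ := exists_smul_of_mem_projPt_mulVec hN hp hpv
    have hv2 : v 2 = 0 := by rcases hv with ⟨θ, rfl⟩ | rfl <;> rfl
    have hw2 := congrFun hk 2
    rw [Pi.smul_apply, hv2, smul_zero] at hw2
    exact (map_eq_zero _).1 hw2
  · intro hw2
    by_cases hw1 : w 1 = 0
    · have hw : w = w 0 • ![1, 0, 0] := by ext i; fin_cases i <;> simp [hw1, hw2]
      have hw0 : w 0 ≠ 0 := fun h0 => ne_zero_of_mem_projPt_mulVec hp
        (by rw [hw, h0, zero_smul]; exact funext fun _ => map_zero _)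
      rw [hw, algVec_smul, Matrix.mulVec_smul, projPt_smul (by simpa using hw0), algVec_vec3,
        map_one, map_zero] at hp
      exact ⟨_, Or.inr rfl, hp⟩
    · have hw : w = w 1 • ![w 0 / w 1, 1, 0] := by
        ext i; fin_cases i <;> simp [hw1, hw2, mul_div_cancel₀]
      rw [hw, algVec_smul, Matrix.mulVec_smul, projPt_smul (by simpa using hw1), algVec_vec3,
        map_one, map_zero] at hp
      exact ⟨_, Or.inl ⟨_, rfl⟩, hp⟩

lemma sublineVecs_subset_subplaneVecs : sublineVecs F K ⊆ subplaneVecs F K := by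
  rintro _ (⟨θ, rfl⟩ | rfl)
  · exact ⟨![θ, 1, 0], fun h => one_ne_zero (congrFun h 1), by
      rw [algVec_vec3, map_one, map_zero]⟩
  · exact ⟨![1, 0, 0], fun h => one_ne_zero (congrFun h 0), by
      rw [algVec_vec3, map_one, map_zero]⟩

lemma sublineVecs_eq_range :
    sublineVecs F K = Set.range fun θ : Option F => ptInfVec (θ.map (algebraMap F K)) := by
  ext v
  simp only [sublineVecs, Set.mem_union, Set.mem_ofPred_eq, Set.mem_singleton_iff, Set.mem_range,
    Option.exists, Option.map_none, Option.map_some, ptInfVec, eq_comm (a := v)]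
  exact or_comm

lemma eq_of_ptInfVec_eq_smul {s t : Option K} {k : K} (h : ptInfVec s = k • ptInfVec t) :
    s = t := by
  have h0 := congrFun h 0
  have h1 := congrFun h 1
  rcases s with _ | a <;> rcases t with _ | b
  · rfl
  · have hk : k = 0 := by simpa [ptInfVec, eq_comm] using h1
    simp [ptInfVec, hk] at h0
  · simp [ptInfVec] at h1
  · have hk : k = 1 := by simpa [ptInfVec, eq_comm] using h1
    simpa [ptInfVec, hk] using h0

lemma ncard_mimg_sublineVecs [Fintype F] (hN : IsUnit N.det) :
    (mimg N (sublineVecs F K)).ncard = Fintype.card F + 1 := by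
  let f : Option F → PP K 3 := fun θ =>
    Projectivization.mk K _ (mulVec_ne_zero hN (ptInfVec_ne (θ.map (algebraMap F K))))
  have hf : ∀ θ, f θ ∈ projPt (N *ᵥ ptInfVec (θ.map (algebraMap F K))) := fun θ => ⟨_, rfl⟩
  have himg : mimg N (sublineVecs F K) = Set.range f := by
    ext p
    rw [sublineVecs_eq_range]
    constructor
    · rintro ⟨_, ⟨θ, rfl⟩, hp⟩
      exact ⟨θ, eq_of_mem_projPt (hf θ) hp⟩
    · rintro ⟨θ, rfl⟩
      exact ⟨_, ⟨θ, rfl⟩, hf θ⟩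
  have hinj : Function.Injective f := by
    intro θ θ' h
    obtain ⟨k, -, hk⟩ := exists_smul_of_mem_projPt_mulVec hN (hf θ) (h ▸ hf θ')
    exact Option.map_injective (algebraMap F K).injective (eq_of_ptInfVec_eq_smul hk)
  rw [himg, Set.ncard_range_of_injective hinj, Nat.card_eq_fintype_card, Fintype.card_option]

lemma exists_isLineOfExt [Fintype F] (hN : IsUnit N.det) :
    ∃ ℓ, IsLineOfExt (Fintype.card F) (mimg N (subplaneVecs F K))
        (mimg N (subplaneVecs F K) ∩ ℓ) ℓ ∧
      ∀ p v, p ∈ projPt (N *ᵥ v) → (p ∈ ℓ ↔ v 2 = 0) := by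
  obtain ⟨X, hX⟩ := projPt_mulVec_nonempty hN (v := ![1, 0, 0])
    (fun h => one_ne_zero (congrFun h 0))
  obtain ⟨Y, hY⟩ := projPt_mulVec_nonempty hN (v := ![0, 1, 0])
    (fun h => one_ne_zero (congrFun h 1))
  have hXY : X ≠ Y := by
    rintro rfl
    obtain ⟨k, -, hk⟩ := exists_smul_of_mem_projPt_mulVec hN hX hY
    simpa using congrFun hk 0
  have hmem : ∀ p v, p ∈ projPt (N *ᵥ v) → (p ∈ lineTh X Y ↔ v 2 = 0) := by
    intro p v hp
    rw [mem_lineTh_mulVec_iff hN hX hY hp]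
    constructor
    · rintro ⟨s, t, rfl⟩
      simp
    · intro hv2
      exact ⟨v 0, v 1, by ext i; fin_cases i <;> simp [hv2]⟩
  have hinter : mimg N (subplaneVecs F K) ∩ lineTh X Y = mimg N (sublineVecs F K) := by
    refine Set.Subset.antisymm ?_ fun p hp => ?_
    · rintro p ⟨hpB, hpℓ⟩
      obtain ⟨w, hw⟩ := mem_mimg_subplaneVecs_iff.1 hpB
      exact (mem_mimg_sublineVecs_iff hN hw).2 ((map_eq_zero _).1 ((hmem p _ hw).1 hpℓ))
    · have hpB := mimg_mono N sublineVecs_subset_subplaneVecs hp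
      obtain ⟨w, hw⟩ := mem_mimg_subplaneVecs_iff.1 hpB
      exact ⟨hpB, (hmem p _ hw).2 ((map_eq_zero _).2 ((mem_mimg_sublineVecs_iff hN hw).1 hp))⟩
  exact ⟨_, ⟨isFlat_lineTh hXY, rfl, hinter ▸ ncard_mimg_sublineVecs hN⟩, hmem⟩

lemma exists_isUnit_det_and_mulVec_eq {u v : Fin 3 → F} (huv : LinearIndependent F ![u, v]) :
    ∃ E : Matrix (Fin 3) (Fin 3) F,
      IsUnit E.det ∧ E *ᵥ ![0, 1, 0] = u ∧ E *ᵥ ![0, 0, 1] = v := by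
  obtain ⟨e, he⟩ : ∃ e, e ∉ Submodule.span F (Set.range ![u, v]) := by
    by_contra! h
    have hrank := finrank_span_eq_card huv
    rw [Submodule.eq_top_iff'.2 h, finrank_top, Module.finrank_fin_fun, Fintype.card_fin] at hrank
    exact absurd hrank (by decide)
  refine ⟨(Matrix.of ![e, u, v])ᵀ, ?_, ?_, ?_⟩
  · rw [← Matrix.isUnit_iff_isUnit_det, ← Matrix.linearIndependent_cols_iff_isUnit]
    exact linearIndependent_finCons.2 ⟨huv, he⟩
  all_goals
    ext i
    simp [Matrix.mulVec, dotProduct, Fin.sum_univ_three]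

lemma IsBaerSubplane.exists_frame {B : Set (PP K 3)} (hB : IsBaerSubplane F B) {S T : PP K 3}
    (hS : S ∈ B) (hT : T ∈ B) (hST : S ≠ T) :
    ∃ N : Matrix (Fin 3) (Fin 3) K, IsUnit N.det ∧ B = mimg N (subplaneVecs F K) ∧
      S ∈ projPt (N *ᵥ ![0, 1, 0]) ∧ T ∈ projPt (N *ᵥ ![0, 0, 1]) := by
  obtain ⟨M, hM, rfl⟩ := hB
  obtain ⟨_, ⟨u, hu, rfl⟩, hS⟩ := hS
  obtain ⟨_, ⟨v, hv, rfl⟩, hT⟩ := hT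
  have huv : LinearIndependent F ![u, v] := by
    rw [LinearIndependent.pair_iff' hu]
    rintro a rfl
    have ha : algebraMap F K a ≠ 0 := fun h => hv (by rw [(map_eq_zero _).1 h, zero_smul])
    rw [algVec_smul, Matrix.mulVec_smul, projPt_smul ha] at hT
    exact hST (eq_of_mem_projPt hS hT)
  obtain ⟨E, hE, rfl, rfl⟩ := exists_isUnit_det_and_mulVec_eq huv
  refine ⟨M * E.map (algebraMap F K), isUnit_det_mul_map hM hE,
    (mimg_mul_map_subplaneVecs M hE).symm, ?_, ?_⟩
  · rwa [← mul_map_mulVec_algVec, algVec_vec3, map_one, map_zero] at hS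
  · rwa [← mul_map_mulVec_algVec, algVec_vec3, map_one, map_zero] at hT

end BaerSubplane

section Conics

variable {F : Type} [Field F] [Algebra F K] {M : Matrix (Fin 3) (Fin 3) K} {p : PP K 3}

lemma conicVecs_range_subset_subplaneVecs :
    conicVecs (Set.range (algebraMap F K)) ⊆ subplaneVecs F K := by
  rintro _ (⟨_, ⟨θ, rfl⟩, rfl⟩ | rfl)
  · exact ⟨![1, θ, θ ^ 2], fun h => one_ne_zero (congrFun h 0), by
      rw [algVec_vec3, map_one, map_pow]⟩
  · exact ⟨![0, 0, 1], fun h => one_ne_zero (congrFun h 2), by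
      rw [algVec_vec3, map_one, map_zero]⟩

lemma sq_eq_mul_of_mem_conicVecs {S : Set K} {v : Fin 3 → K} (hv : v ∈ conicVecs S) :
    v 1 ^ 2 = v 0 * v 2 := by
  rcases hv with ⟨θ, -, rfl⟩ | rfl <;> simp

lemma mem_mimg_conicVecs_range_iff (hM : IsUnit M.det) {w : Fin 3 → F}
    (hp : p ∈ projPt (M *ᵥ algVec F w)) :
    p ∈ mimg M (conicVecs (Set.range (algebraMap F K))) ↔ w 1 ^ 2 = w 0 * w 2 := by
  constructor
  · rintro ⟨v, hv, hpv⟩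
    obtain ⟨k, -, hk⟩ := exists_smul_of_mem_projPt_mulVec hM hp hpv
    have hwi : ∀ i, algebraMap F K (w i) = k * v i := congrFun hk
    refine (algebraMap F K).injective ?_
    rw [map_pow, map_mul, hwi, hwi, hwi]
    linear_combination k ^ 2 * sq_eq_mul_of_mem_conicVecs hv
  · intro hw
    by_cases hw0 : w 0 = 0
    · have hw1 : w 1 = 0 := by simpa [hw0] using hw
      have hwv : w = w 2 • ![0, 0, 1] := by ext i; fin_cases i <;> simp [hw0, hw1]
      have hw2 : w 2 ≠ 0 := fun h2 => ne_zero_of_mem_projPt_mulVec hp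
        (by rw [hwv, h2, zero_smul]; exact funext fun _ => map_zero _)
      rw [hwv, algVec_smul, Matrix.mulVec_smul, projPt_smul (by simpa using hw2), algVec_vec3,
        map_one, map_zero] at hp
      exact ⟨_, Or.inr rfl, hp⟩
    · have hwv : w = w 0 • ![1, w 1 / w 0, (w 1 / w 0) ^ 2] := by
        ext i
        fin_cases i
        · simp
        · simp [mul_div_cancel₀, hw0]
        · simp only [Fin.reduceFinMk, Pi.smul_apply, Matrix.cons_val, smul_eq_mul]
          field_simp
          linear_combination -hw
      rw [hwv, algVec_smul, Matrix.mulVec_smul, projPt_smul (by simpa using hw0), algVec_vec3,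
        map_one, map_pow] at hp
      exact ⟨_, Or.inl ⟨_, ⟨_, rfl⟩, rfl⟩, hp⟩

lemma mem_mimg_conicVecs_univ_iff (hM : IsUnit M.det) {v : Fin 3 → K}
    (hp : p ∈ projPt (M *ᵥ v)) : p ∈ mimg M (conicVecs Set.univ) ↔ v 1 ^ 2 = v 0 * v 2 := by
  rw [← mem_mimg_conicVecs_range_iff (F := K) hM hp, Algebra.algebraMap_self, RingHom.coe_id,
    Set.range_id]

open Polynomial in
lemma eq_zero_of_natDegree_le_of_coeff_eq_zero_of_le_encard {f : K[X]} {d : ℕ}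
    (hdeg : f.natDegree ≤ d) (hcoeff : f.coeff d = 0) {S : Set K} (hS : d ≤ S.encard)
    (hf : ∀ θ ∈ S, f.eval θ = 0) : f = 0 := by
  obtain ⟨S', hS'S, hS'⟩ := Set.exists_subset_encard_eq hS
  have hfin : S'.Finite := Set.finite_of_encard_eq_coe hS'
  have hcard : hfin.toFinset.card = d := by
    rw [hfin.encard_eq_coe_toFinset_card] at hS'
    exact_mod_cast hS'
  refine eq_zero_of_degree_lt_of_eval_finset_eq_zero hfin.toFinset ?_
    fun θ hθ => hf θ (hS'S (hfin.mem_toFinset.1 hθ))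
  rw [hcard, degree_lt_iff_coeff_zero]
  intro k hk
  obtain rfl | hk := hk.eq_or_lt
  · exact hcoeff
  · exact coeff_eq_zero_of_natDegree_lt (hdeg.trans_lt hk)

-- Along `θ ↦ (1, θ, θ²)` the form is a quartic polynomial in `θ`, and its coefficient of `θ⁴` is
-- the value at `(0, 0, 1)`.
open Polynomial in
lemma conicForm_mulVec_eq_zero (G : Matrix (Fin 3) (Fin 3) K) {S : Set K} (hS : 4 ≤ S.encard)
    (h : ∀ v ∈ conicVecs S, (G *ᵥ v) 1 ^ 2 = (G *ᵥ v) 0 * (G *ᵥ v) 2) (θ : K) :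
    (G *ᵥ ![1, θ, θ ^ 2]) 1 ^ 2 = (G *ᵥ ![1, θ, θ ^ 2]) 0 * (G *ᵥ ![1, θ, θ ^ 2]) 2 := by
  let g : Fin 3 → K[X] := fun i => C (G i 2) * X ^ 2 + C (G i 1) * X + C (G i 0)
  have hg : ∀ i, (g i).natDegree ≤ 2 := fun i => natDegree_quadratic_le
  have hg_eval : ∀ i θ, (g i).eval θ = (G *ᵥ ![1, θ, θ ^ 2]) i := by
    intro i θ
    simp only [g, eval_add, eval_mul, eval_C, eval_pow, eval_X, Matrix.mulVec, dotProduct,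
      Fin.sum_univ_three, Matrix.cons_val]
    ring
  have hg_coeff : ∀ i, (g i).coeff 2 = (G *ᵥ ![0, 0, 1]) i := by
    intro i
    simp [g, Matrix.mulVec, dotProduct, Fin.sum_univ_three]
  have hzero : g 1 * g 1 - g 0 * g 2 = 0 := by
    refine eq_zero_of_natDegree_le_of_coeff_eq_zero_of_le_encard (d := 4) ?_ ?_ hS ?_
    · exact (natDegree_sub_le _ _).trans (max_le (natDegree_mul_le_of_le (hg 1) (hg 1))
        (natDegree_mul_le_of_le (hg 0) (hg 2)))
    · rw [coeff_sub, coeff_mul_add_eq_of_natDegree_le (hg 1) (hg 1),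
        coeff_mul_add_eq_of_natDegree_le (hg 0) (hg 2), hg_coeff, hg_coeff, hg_coeff, ← pow_two,
        h _ (Or.inr rfl), sub_self]
    · intro θ hθ
      rw [eval_sub, eval_mul, eval_mul, hg_eval, hg_eval, hg_eval, ← pow_two,
        h _ (Or.inl ⟨θ, hθ, rfl⟩), sub_self]
  have hθ := congrArg (eval θ) hzero
  rwa [eval_sub, eval_mul, eval_mul, hg_eval, hg_eval, hg_eval, eval_zero, sub_eq_zero,
    ← pow_two] at hθ

lemma mimg_conicVecs_univ_subset (hM : IsUnit M.det) {S : Set K} (hS : 4 ≤ S.encard)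
    {D : Set (PP K 3)} (hD : IsFq2Conic D) (h : mimg M (conicVecs S) ⊆ D) :
    mimg M (conicVecs Set.univ) ⊆ D := by
  obtain ⟨L, hL, rfl⟩ := hD
  have hframe : ∀ v, L *ᵥ ((L⁻¹ * M) *ᵥ v) = M *ᵥ v := fun v => by
    rw [Matrix.mulVec_mulVec, Matrix.mul_nonsing_inv_cancel_left L M hL]
  have hform : ∀ v ∈ conicVecs S, ((L⁻¹ * M) *ᵥ v) 1 ^ 2 =
      ((L⁻¹ * M) *ᵥ v) 0 * ((L⁻¹ * M) *ᵥ v) 2 := by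
    intro v hv
    have hv0 : v ≠ 0 := by
      rintro rfl
      rcases hv with ⟨θ, -, hθ⟩ | hv
      · exact zero_ne_one (congrFun hθ 0)
      · exact zero_ne_one (congrFun hv 2)
    obtain ⟨p, hp⟩ := projPt_mulVec_nonempty hM hv0
    have hpD := h ⟨v, hv, hp⟩
    rw [← hframe] at hp
    exact (mem_mimg_conicVecs_univ_iff hL hp).1 hpD
  rintro p ⟨v, hv, hp⟩
  rw [← hframe] at hp
  rw [mem_mimg_conicVecs_univ_iff hL hp]
  rcases hv with ⟨θ, -, rfl⟩ | hv
  · exact conicForm_mulVec_eq_zero _ hS hform θ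
  · exact hform v (Or.inr hv)

end Conics

section AdaptedFrame

variable {F : Type} [Field F] [Algebra F K] {N : Matrix (Fin 3) (Fin 3) K}
  {B mT : Set (PP K 3)} {T P : PP K 3} {ε : K}

/-- In the coordinates `(x, y, z)` of the frame `N`, the Baer subplane `B` is the canonical one,
the line at infinity is `x = ε y` with `ε ∉ F`, the points `P` and `T` are `(ε, 1, 0)` and
`(0, 0, 1)`, and the line `mT` of `B` is `x = 0`. -/
structure IsAdaptedFrame (F : Type) [Field F] [Algebra F K] (B : Set (PP K 3)) (T P : PP K 3)
    (mT : Set (PP K 3)) (N : Matrix (Fin 3) (Fin 3) K) (ε : K) : Prop where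
  isUnit_det : IsUnit N.det
  notMem_range : ε ∉ Set.range (algebraMap F K)
  eq_mimg : B = mimg N (subplaneVecs F K)
  mem_linf_iff : ∀ p v, p ∈ projPt (N *ᵥ v) → (p ∈ linf K ↔ v 0 = ε * v 1)
  P_mem : P ∈ projPt (N *ᵥ ![ε, 1, 0])
  T_mem : T ∈ projPt (N *ᵥ ![0, 0, 1])
  mem_line_iff : ∀ p v, p ∈ projPt (N *ᵥ v) → (p ∈ mT ↔ p ∈ B ∧ v 0 = 0)

lemma exists_frame_of_isLineOf {q : ℕ} (hq : 0 < q) (hB : IsBaerSubplane F B)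
    (hm : IsLineOf q B mT) (hT : T ∈ mT) :
    ∃ N : Matrix (Fin 3) (Fin 3) K, IsUnit N.det ∧ B = mimg N (subplaneVecs F K) ∧
      T ∈ projPt (N *ᵥ ![0, 0, 1]) ∧
      ∀ p v, p ∈ projPt (N *ᵥ v) → (p ∈ mT ↔ p ∈ B ∧ v 0 = 0) := by
  obtain ⟨ℓ, hℓ, rfl, hcard⟩ := hm
  obtain ⟨S, ⟨hSB, hSℓ⟩, hST⟩ := Set.exists_ne_of_one_lt_ncard (by rw [hcard]; omega) T
  obtain ⟨N, hN, hBN, hSN, hTN⟩ := hB.exists_frame hSB hT.1 hST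
  refine ⟨N, hN, hBN, hTN, fun p v hp => and_congr_right fun _ => ?_⟩
  rw [hℓ.eq_lineTh hSℓ hT.2 hST, mem_lineTh_mulVec_iff hN hSN hTN hp]
  constructor
  · rintro ⟨s, t, rfl⟩
    simp
  · intro hv0
    exact ⟨v 1, v 2, by ext i; fin_cases i <;> simp [hv0]⟩

lemma exists_mem_linf_iff_of_tangent (hN : IsUnit N.det) (hT : T ∈ projPt (N *ᵥ ![0, 0, 1]))
    (htan : mimg N (subplaneVecs F K) ∩ linf K = {T}) :
    ∃ ε : K, ε ∉ Set.range (algebraMap F K) ∧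
      ∀ p v, p ∈ projPt (N *ᵥ v) → (p ∈ linf K ↔ v 0 = ε * v 1) := by
  have hT2 : N 2 2 = 0 := by
    have hTlinf : T ∈ linf K := (htan.ge rfl).2
    simpa [Matrix.mulVec, dotProduct, Fin.sum_univ_three] using (mem_linf_iff hT).1 hTlinf
  have hlinf : ∀ p v, p ∈ projPt (N *ᵥ v) → (p ∈ linf K ↔ N 2 0 * v 0 + N 2 1 * v 1 = 0) := by
    intro p v hp
    rw [mem_linf_iff hp]
    simp [Matrix.mulVec, dotProduct, Fin.sum_univ_three, hT2]
  have hne : ∀ a b : F, a ≠ 0 ∨ b ≠ 0 →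
      N 2 0 * algebraMap F K a + N 2 1 * algebraMap F K b ≠ 0 := by
    intro a b hab h0
    have hvec : (algVec F ![a, b, 0] : Fin 3 → K) ≠ 0 := fun h => hab.elim
      (· ((map_eq_zero (algebraMap F K)).1 (congrFun h 0)))
      (· ((map_eq_zero (algebraMap F K)).1 (congrFun h 1)))
    obtain ⟨p, hp⟩ := projPt_mulVec_nonempty hN hvec
    obtain rfl : p = T :=
      htan.le ⟨mem_mimg_subplaneVecs_iff.2 ⟨_, hp⟩, (hlinf p _ hp).2 h0⟩
    obtain ⟨k, -, hk⟩ := exists_smul_of_mem_projPt_mulVec hN hp hT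
    have ha : a = 0 := by simpa [algVec_vec3] using congrFun hk 0
    have hb : b = 0 := by simpa [algVec_vec3] using congrFun hk 1
    exact hab.elim (· ha) (· hb)
  have h20 : N 2 0 ≠ 0 := by simpa using hne 1 0 (Or.inl one_ne_zero)
  refine ⟨-N 2 1 / N 2 0, ?_, fun p v hp => ?_⟩
  · rintro ⟨a, ha⟩
    refine hne a 1 (Or.inr one_ne_zero) ?_
    rw [ha, mul_div_cancel₀ _ h20, map_one, mul_one, neg_add_cancel]
  · rw [hlinf p v hp, add_eq_zero_iff_eq_neg, ← neg_mul, div_mul_eq_mul_div, eq_div_iff h20,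
      mul_comm (v 0)]

/-- The matrix of the shear `(x, y, z) ↦ (x, y, a x + b y + z)`. -/
def shearMatrix (a b : F) : Matrix (Fin 3) (Fin 3) F := !![1, 0, 0; 0, 1, 0; a, b, 1]

lemma isUnit_det_shearMatrix (a b : F) : IsUnit (shearMatrix a b).det := by
  simp [shearMatrix, Matrix.det_fin_three]

lemma map_shearMatrix_mulVec (a b : F) (v : Fin 3 → K) :
    (shearMatrix a b).map (algebraMap F K) *ᵥ v =
      ![v 0, v 1, algebraMap F K a * v 0 + algebraMap F K b * v 1 + v 2] := by
  ext i
  fin_cases i <;> simp [shearMatrix, Matrix.mulVec, dotProduct, Fin.sum_univ_three]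

lemma exists_mem_projPt_of_mem_linf (hN : IsUnit N.det)
    (hlinf : ∀ p v, p ∈ projPt (N *ᵥ v) → (p ∈ linf K ↔ v 0 = ε * v 1))
    (hT : T ∈ projPt (N *ᵥ ![0, 0, 1])) (hP : P ∈ linf K) (hPT : P ≠ T) :
    ∃ d, P ∈ projPt (N *ᵥ ![ε, 1, d]) := by
  obtain ⟨v, hv⟩ := exists_mem_projPt_mulVec hN P
  have hv0 : v 0 = ε * v 1 := (hlinf P v hv).1 hP
  by_cases hv1 : v 1 = 0
  · have hvT : v = v 2 • ![0, 0, 1] := by ext i; fin_cases i <;> simp [hv0, hv1]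
    have hv2 : v 2 ≠ 0 := fun h2 => ne_zero_of_mem_projPt_mulVec hv (by rw [hvT, h2, zero_smul])
    rw [hvT, Matrix.mulVec_smul, projPt_smul hv2] at hv
    exact absurd (eq_of_mem_projPt hv hT) hPT
  · have hvP : v = v 1 • ![ε, 1, v 2 / v 1] := by
      ext i
      fin_cases i <;> simp [hv0, mul_comm, mul_div_cancel₀, hv1]
    rw [hvP, Matrix.mulVec_smul, projPt_smul hv1] at hv
    exact ⟨_, hv⟩

lemma exists_isAdaptedFrame (hrank : Module.finrank F K = 2) {q : ℕ} (hq : 0 < q)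
    (hB : IsBaerSubplane F B) (htan : B ∩ linf K = {T}) (hm : IsLineOf q B mT) (hT : T ∈ mT)
    (hP : P ∈ linf K) (hPT : P ≠ T) : ∃ N ε, IsAdaptedFrame F B T P mT N ε := by
  obtain ⟨N, hN, rfl, hTN, hmN⟩ := exists_frame_of_isLineOf hq hB hm hT
  obtain ⟨ε, hε, hlinf⟩ := exists_mem_linf_iff_of_tangent hN hTN htan
  obtain ⟨d, hd⟩ := exists_mem_projPt_of_mem_linf hN hlinf hTN hP hPT
  obtain ⟨b, a, rfl⟩ := exists_add_mul_eq hrank hε d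
  have hshear : ∀ u : Fin 3 → K, (N * (shearMatrix a b).map (algebraMap F K)) *ᵥ u =
      N *ᵥ ![u 0, u 1, algebraMap F K a * u 0 + algebraMap F K b * u 1 + u 2] := fun u => by
    rw [← Matrix.mulVec_mulVec, map_shearMatrix_mulVec]
  refine ⟨N * (shearMatrix a b).map (algebraMap F K), ε,
    isUnit_det_mul_map hN (isUnit_det_shearMatrix a b), hε,
    (mimg_mul_map_subplaneVecs N (isUnit_det_shearMatrix a b)).symm,
    fun p u hp => ?_, ?_, ?_, fun p u hp => ?_⟩
  · rw [hshear] at hp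
    exact (hlinf p _ hp :)
  · rw [hshear]
    simpa [add_comm] using hd
  · rw [hshear]
    simpa using hTN
  · rw [hshear] at hp
    exact (hmN p _ hp :)

end AdaptedFrame

section Pencil

variable {F : Type} [Field F] [Algebra F K] {N : Matrix (Fin 3) (Fin 3) K} {P : PP K 3}
  {ε a d : K}

/-- The matrix taking the standard Baer subline to `{(1, 0, a + θ d) : θ ∈ F} ∪ {(0, 0, 1)}`, and
the point `(0, 0, 1)` to `(ε, 1, 0)`. -/
def pencilMatrix (ε a d : K) : Matrix (Fin 3) (Fin 3) K := !![0, 1, ε; 0, 0, 1; d, a, 0]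

/-- The Baer pencil with vertex `P` whose base has coordinates
`{(1, 0, a + θ d) : θ ∈ F} ∪ {(0, 0, 1)}` in the frame `N`. -/
def pencil (F : Type) [Field F] [Algebra F K] (N : Matrix (Fin 3) (Fin 3) K) (P : PP K 3)
    (ε a d : K) : Set (PP K 3) :=
  ⋃ X ∈ mimg (N * pencilMatrix ε a d) (sublineVecs F K), lineTh P X

lemma pencilMatrix_mulVec (ε a d : K) (u : Fin 3 → K) :
    pencilMatrix ε a d *ᵥ u = ![u 1 + ε * u 2, u 2, d * u 0 + a * u 1] := by
  ext i
  fin_cases i <;> simp [pencilMatrix, Matrix.mulVec, dotProduct, Fin.sum_univ_three]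

lemma isUnit_det_mul_pencilMatrix (hN : IsUnit N.det) (hd : d ≠ 0) :
    IsUnit (N * pencilMatrix ε a d).det := by
  rw [Matrix.det_mul]
  refine hN.mul (IsUnit.mk0 _ ?_)
  simpa [pencilMatrix, Matrix.det_fin_three] using hd

lemma mem_pencil_iff (hN : IsUnit N.det) (hP : P ∈ projPt (N *ᵥ ![ε, 1, 0])) (hd : d ≠ 0)
    {p : PP K 3} {v : Fin 3 → K} (hp : p ∈ projPt (N *ᵥ v)) :
    p ∈ pencil F N P ε a d ↔
      v 0 = ε * v 1 ∨ ∃ s : F, v 2 = (a + algebraMap F K s * d) * (v 0 - ε * v 1) := by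
  have hA : ∀ u : Fin 3 → K, (N * pencilMatrix ε a d) *ᵥ u =
      N *ᵥ ![u 1 + ε * u 2, u 2, d * u 0 + a * u 1] := fun u => by
    rw [← Matrix.mulVec_mulVec, pencilMatrix_mulVec]
  simp only [pencil, Set.mem_iUnion, exists_prop]
  constructor
  · rintro ⟨X, ⟨u, hu, hX⟩, hpX⟩
    rw [hA] at hX
    obtain ⟨s, t, rfl⟩ := (mem_lineTh_mulVec_iff hN hP hX hp).1 hpX
    rcases hu with ⟨θ, rfl⟩ | rfl
    · refine Or.inr ⟨θ, ?_⟩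
      simp only [Pi.add_apply, Pi.smul_apply, Matrix.cons_val, smul_eq_mul]
      ring
    · exact Or.inl (by simp [mul_comm])
  · have hmem : ∀ u ∈ sublineVecs F K, u ≠ 0 → (∃ s t : K,
        s • ![ε, 1, 0] + t • ![u 1 + ε * u 2, u 2, d * u 0 + a * u 1] = v) →
        ∃ X, X ∈ mimg (N * pencilMatrix ε a d) (sublineVecs F K) ∧ p ∈ lineTh P X := by
      intro u hu hu0 hv
      obtain ⟨X, hX⟩ :=
        projPt_mulVec_nonempty (isUnit_det_mul_pencilMatrix (ε := ε) (a := a) hN hd) hu0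
      exact ⟨X, ⟨u, hu, hX⟩, (mem_lineTh_mulVec_iff hN hP (hA u ▸ hX) hp).2 hv⟩
    rintro (h0 | ⟨θ, h2⟩)
    · refine hmem _ (Or.inr rfl) (fun h => one_ne_zero (congrFun h 0)) ⟨v 1, v 2 / d, ?_⟩
      ext i
      fin_cases i <;> simp [h0, mul_comm (v 1), hd]
    · refine hmem _ (Or.inl ⟨θ, rfl⟩) (fun h => one_ne_zero (congrFun h 1))
        ⟨v 1, v 0 - ε * v 1, ?_⟩
      ext i
      fin_cases i <;>
        simp only [Fin.reduceFinMk, Pi.add_apply, Pi.smul_apply, Matrix.cons_val, smul_eq_mul,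
          h2] <;>
        ring

lemma isLinfBaerPencil_pencil (hN : IsUnit N.det) (hP : P ∈ projPt (N *ᵥ ![ε, 1, 0]))
    (hlinf : ∀ p v, p ∈ projPt (N *ᵥ v) → (p ∈ linf K ↔ v 0 = ε * v 1)) (hd : d ≠ 0) :
    IsLinfBaerPencil F (pencil F N P ε a d) P := by
  have hNA := isUnit_det_mul_pencilMatrix (ε := ε) (a := a) hN hd
  have hP' : P ∈ projPt ((N * pencilMatrix ε a d) *ᵥ ![0, 0, 1]) := by
    rw [← Matrix.mulVec_mulVec, pencilMatrix_mulVec]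
    simpa using hP
  have hlinf' : ∀ p u, p ∈ projPt ((N * pencilMatrix ε a d) *ᵥ u) → (p ∈ linf K ↔ u 1 = 0) := by
    intro p u hp
    rw [← Matrix.mulVec_mulVec, pencilMatrix_mulVec] at hp
    simpa using hlinf p _ hp
  refine ⟨(hlinf' P _ hP').2 rfl, mimg (N * pencilMatrix ε a d) (linfVecs K),
    mimg (N * pencilMatrix ε a d) (sublineVecs F K), ⟨_, hNA, rfl, rfl⟩, ?_, ?_, rfl⟩
  · rintro ⟨u, ⟨-, hu2⟩, hu⟩
    obtain ⟨k, -, hk⟩ := exists_smul_of_mem_projPt_mulVec hNA hP' hu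
    simpa [hu2] using congrFun hk 2
  · obtain ⟨X, hX⟩ := projPt_mulVec_nonempty hNA (v := ![1, 0, 0])
      (fun h => one_ne_zero (congrFun h 0))
    refine ⟨X, ⟨⟨_, Or.inr rfl, hX⟩, (hlinf' X _ hX).2 rfl⟩, ?_⟩
    rintro Y ⟨⟨_, ⟨θ, rfl⟩ | rfl, hY⟩, hYlinf⟩
    · exact absurd ((hlinf' Y _ hY).1 hYlinf) one_ne_zero
    · exact eq_of_mem_projPt hY hX

end Pencil

section Traces

variable {F : Type} [Field F] [Algebra F K] {N : Matrix (Fin 3) (Fin 3) K}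
  {B mT : Set (PP K 3)} {T P : PP K 3} {ε : K} {t n : F}

/-- The matrix taking the standard conic to `z x = c (x² - t x y + n y²)`. -/
def conicMatrix (t n c : F) : Matrix (Fin 3) (Fin 3) F :=
  !![1, 0, 0; 0, 1, 0; c, -(c * t), c * n]

/-- The `F_q`-conic `z x = c (x² - t x y + n y²)` in the frame `N`. -/
def traceConic (N : Matrix (Fin 3) (Fin 3) K) (t n c : F) : Set (PP K 3) :=
  mimg (N * (conicMatrix t n c).map (algebraMap F K)) (conicVecs (Set.range (algebraMap F K)))

/-- The pencil `x = ε y` or `z ∈ (c + F δ) (x - ε y)`, where `δ = t - ε` is the conjugate of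
`ε`. -/
def framePencil (N : Matrix (Fin 3) (Fin 3) K) (P : PP K 3) (ε : K) (t c : F) : Set (PP K 3) :=
  pencil F N P ε (algebraMap F K c) (algebraMap F K t - ε)

lemma conicMatrix_mulVec (t n c : F) (w : Fin 3 → F) :
    conicMatrix t n c *ᵥ w = ![w 0, w 1, c * w 0 - c * t * w 1 + c * n * w 2] := by
  ext i
  fin_cases i <;>
    simp [conicMatrix, Matrix.mulVec, dotProduct, Fin.sum_univ_three, sub_eq_add_neg]

lemma isUnit_det_conicMatrix {c : F} (hn : n ≠ 0) (hc : c ≠ 0) :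
    IsUnit (conicMatrix t n c).det := by
  simp [conicMatrix, Matrix.det_fin_three, hn, hc]

lemma mem_traceConic_iff (hN : IsUnit N.det) {c : F} (hn : n ≠ 0) (hc : c ≠ 0) {w : Fin 3 → F}
    {p : PP K 3} (hp : p ∈ projPt (N *ᵥ algVec F w)) :
    p ∈ traceConic N t n c ↔ w 2 * w 0 = c * (w 0 ^ 2 - t * w 0 * w 1 + n * w 1 ^ 2) := by
  have hE := isUnit_det_conicMatrix (t := t) hn hc
  obtain ⟨u, rfl⟩ : ∃ u, conicMatrix t n c *ᵥ u = w :=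
    ⟨(conicMatrix t n c)⁻¹ *ᵥ w, by
      rw [Matrix.mulVec_mulVec, Matrix.mul_nonsing_inv _ hE, Matrix.one_mulVec]⟩
  rw [← mul_map_mulVec_algVec] at hp
  rw [traceConic, mem_mimg_conicVecs_range_iff (isUnit_det_mul_map hN hE) hp, conicMatrix_mulVec]
  simp only [Matrix.cons_val]
  have hdiff : (c * u 0 - c * t * u 1 + c * n * u 2) * u 0 -
      c * (u 0 ^ 2 - t * u 0 * u 1 + n * u 1 ^ 2) = -(c * n) * (u 1 ^ 2 - u 0 * u 2) := by ring
  rw [← sub_eq_zero (a := _ * u 0), hdiff, neg_mul, neg_eq_zero,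
    mul_eq_zero_iff_left (mul_ne_zero hc hn), sub_eq_zero]

namespace IsAdaptedFrame

lemma ext_of_subset (h : IsAdaptedFrame F B T P mT N ε) {X Y : Set (PP K 3)} (hX : X ⊆ B)
    (hY : Y ⊆ B)
    (hXY : ∀ (p : PP K 3) (w : Fin 3 → F), p ∈ projPt (N *ᵥ algVec F w) → (p ∈ X ↔ p ∈ Y)) :
    X = Y := by
  have hw : ∀ p ∈ B, (p ∈ X ↔ p ∈ Y) := by
    intro p hp
    rw [h.eq_mimg] at hp
    obtain ⟨w, hw⟩ := mem_mimg_subplaneVecs_iff.1 hp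
    exact hXY p w hw
  ext p
  exact ⟨fun hp => (hw p (hX hp)).1 hp, fun hp => (hw p (hY hp)).2 hp⟩

lemma notMem_linf_iff (h : IsAdaptedFrame F B T P mT N ε) {p : PP K 3} {w : Fin 3 → F}
    (hp : p ∈ projPt (N *ᵥ algVec F w)) : p ∉ linf K ↔ w 0 ≠ 0 ∨ w 1 ≠ 0 := by
  rw [h.mem_linf_iff p _ hp, ← sub_eq_zero]
  refine ⟨fun hne => ?_, sub_mul_ne_zero h.notMem_range⟩
  by_contra! hw
  exact hne (by simp [algVec, hw])

lemma isLinfBaerPencil (h : IsAdaptedFrame F B T P mT N ε) (t c : F) :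
    IsLinfBaerPencil F (framePencil N P ε t c) P :=
  isLinfBaerPencil_pencil h.isUnit_det h.P_mem h.mem_linf_iff
    fun h0 => sub_notMem_range h.notMem_range t ⟨0, by rw [map_zero, h0]⟩

lemma mem_framePencil_iff (h : IsAdaptedFrame F B T P mT N ε) {t c : F} {p : PP K 3}
    (hpinf : p ∉ linf K) {v : Fin 3 → K} (hp : p ∈ projPt (N *ᵥ v)) :
    p ∈ framePencil N P ε t c ↔ ∃ s : F, v 2 =
      (algebraMap F K c + algebraMap F K s * (algebraMap F K t - ε)) * (v 0 - ε * v 1) := by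
  rw [h.mem_linf_iff p v hp] at hpinf
  rw [framePencil, mem_pencil_iff h.isUnit_det h.P_mem _ hp, or_iff_right hpinf]
  exact fun h0 => sub_notMem_range h.notMem_range t ⟨0, by rw [map_zero, h0]⟩

lemma existsUnique_mem_framePencil (h : IsAdaptedFrame F B T P mT N ε)
    (hrank : Module.finrank F K = 2) (t : F) {A : PP K 3} (hA : A ∉ linf K) :
    ∃! c : F, A ∈ framePencil N P ε t c := by
  obtain ⟨v, hv⟩ := exists_mem_projPt_mulVec h.isUnit_det A
  have hne : v 0 - ε * v 1 ≠ 0 := fun h0 => hA ((h.mem_linf_iff A v hv).2 (sub_eq_zero.1 h0))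
  simpa only [h.mem_framePencil_iff hA hv, ← div_eq_iff hne, eq_comm (b := v 2 / _)] using
    existsUnique_exists_add_mul_eq hrank (sub_notMem_range h.notMem_range t)
      (v 2 / (v 0 - ε * v 1))

lemma mem_framePencil_algVec_iff (h : IsAdaptedFrame F B T P mT N ε)
    (hn : ε * (algebraMap F K t - ε) = algebraMap F K n) {c : F} {p : PP K 3}
    (hpinf : p ∉ linf K) {w : Fin 3 → F} (hp : p ∈ projPt (N *ᵥ algVec F w)) :
    p ∈ framePencil N P ε t c ↔
      w 2 * w 0 = c * (w 0 ^ 2 - t * w 0 * w 1 + n * w 1 ^ 2) := by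
  rw [h.mem_framePencil_iff hpinf hp]
  exact exists_eq_mul_sub_iff h.notMem_range hn ((h.notMem_linf_iff hp).1 hpinf) c (w 2)

lemma ne_zero_of_mul_sub_eq (h : IsAdaptedFrame F B T P mT N ε)
    (hn : ε * (algebraMap F K t - ε) = algebraMap F K n) : n ≠ 0 := by
  simpa using normForm_ne_zero h.notMem_range hn (x := 0) (y := 1) (Or.inr one_ne_zero)

lemma traceConic_subset (h : IsAdaptedFrame F B T P mT N ε) {c : F} (hn : n ≠ 0) (hc : c ≠ 0) :
    traceConic N t n c ⊆ B := by
  rw [h.eq_mimg, ← mimg_mul_map_subplaneVecs N (isUnit_det_conicMatrix (t := t) hn hc)]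
  exact mimg_mono _ conicVecs_range_subset_subplaneVecs

lemma isFqConic_traceConic (h : IsAdaptedFrame F B T P mT N ε) {c : F} (hn : n ≠ 0)
    (hc : c ≠ 0) : IsFqConic F (traceConic N t n c) :=
  ⟨_, isUnit_det_mul_map h.isUnit_det (isUnit_det_conicMatrix hn hc), rfl⟩

lemma T_mem_traceConic (h : IsAdaptedFrame F B T P mT N ε) {c : F} (hn : n ≠ 0) (hc : c ≠ 0) :
    T ∈ traceConic N t n c := by
  have hT : T ∈ projPt (N *ᵥ algVec F ![0, 0, 1]) := by
    rw [algVec_vec3, map_zero, map_one]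
    exact h.T_mem
  simp [mem_traceConic_iff h.isUnit_det hn hc hT]

-- `(ε, 1, 0)` is the image of `(ε, 1, ε⁻¹)` under the conic matrix because `n / ε = t - ε`.
lemma P_mem_of_traceConic_subset (h : IsAdaptedFrame F B T P mT N ε)
    (hn : ε * (algebraMap F K t - ε) = algebraMap F K n)
    (hcard : 4 ≤ (Set.range (algebraMap F K)).encard) {c : F} (hc : c ≠ 0) {D : Set (PP K 3)}
    (hD : IsFq2Conic D) (hCD : traceConic N t n c ⊆ D) : P ∈ D := by
  have hε0 : ε ≠ 0 := fun h0 => h.notMem_range ⟨0, by rw [map_zero, h0]⟩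
  have hM := isUnit_det_mul_map h.isUnit_det
    (isUnit_det_conicMatrix (t := t) (h.ne_zero_of_mul_sub_eq hn) hc)
  have hvec : (conicMatrix t n c).map (algebraMap F K) *ᵥ ![ε, 1, ε⁻¹] = ![ε, 1, 0] := by
    ext i
    fin_cases i
    · simp [conicMatrix, Matrix.mulVec, dotProduct, Fin.sum_univ_three]
    · simp [conicMatrix, Matrix.mulVec, dotProduct, Fin.sum_univ_three]
    · simp only [conicMatrix, Matrix.mulVec, dotProduct, Fin.sum_univ_three, Fin.reduceFinMk,
        Matrix.map_apply, Matrix.of_apply, Matrix.cons_val, map_neg, map_mul, ← hn]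
      field_simp
      ring
  refine mimg_conicVecs_univ_subset hM hcard hD hCD ?_
  rw [mem_mimg_conicVecs_univ_iff hM (v := ![ε, 1, ε⁻¹])]
  · simp [hε0]
  · rw [← Matrix.mulVec_mulVec, hvec]
    exact h.P_mem

lemma framePencil_inter_sdiff_linf (h : IsAdaptedFrame F B T P mT N ε)
    (hn : ε * (algebraMap F K t - ε) = algebraMap F K n) {c : F} (hc : c ≠ 0) :
    (framePencil N P ε t c ∩ B) \ linf K = traceConic N t n c \ linf K := by
  have hn0 := h.ne_zero_of_mul_sub_eq hn
  have hCB := h.traceConic_subset (t := t) hn0 hc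
  refine h.ext_of_subset (fun p hp => hp.1.2) (fun p hp => hCB hp.1) fun p w hw => ?_
  refine and_congr_left fun hpinf => ?_
  have hpB : p ∈ B := h.eq_mimg.symm ▸ mem_mimg_subplaneVecs_iff.2 ⟨w, hw⟩
  rw [Set.mem_inter_iff, and_iff_left hpB, h.mem_framePencil_algVec_iff hn hpinf hw,
    mem_traceConic_iff h.isUnit_det hn0 hc hw]

lemma framePencil_zero_inter_sdiff_linf (h : IsAdaptedFrame F B T P mT N ε)
    (hn : ε * (algebraMap F K t - ε) = algebraMap F K n) {ℓ : Set (PP K 3)}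
    (hℓ : ∀ p v, p ∈ projPt (N *ᵥ v) → (p ∈ ℓ ↔ v 2 = 0)) :
    (framePencil N P ε t 0 ∩ B) \ linf K = (mT ∪ B ∩ ℓ) \ linf K := by
  have hmB : mT ⊆ B := by
    intro p hp
    obtain ⟨v, hv⟩ := exists_mem_projPt_mulVec h.isUnit_det p
    exact ((h.mem_line_iff p v hv).1 hp).1
  refine h.ext_of_subset (fun p hp => hp.1.2)
    (fun p hp => hp.1.elim (hmB ·) (·.1)) fun p w hw => ?_
  refine and_congr_left fun hpinf => ?_
  have hpB : p ∈ B := h.eq_mimg.symm ▸ mem_mimg_subplaneVecs_iff.2 ⟨w, hw⟩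
  rw [Set.mem_inter_iff, and_iff_left hpB, h.mem_framePencil_algVec_iff hn hpinf hw,
    Set.mem_union, Set.mem_inter_iff, and_iff_right hpB, h.mem_line_iff p _ hw,
    and_iff_right hpB, hℓ p _ hw, zero_mul, mul_eq_zero, or_comm]
  exact or_congr (map_eq_zero _).symm (map_eq_zero _).symm

lemma framePencil_inter_sdiff_linf_injective (h : IsAdaptedFrame F B T P mT N ε)
    (hrank : Module.finrank F K = 2) (hn : ε * (algebraMap F K t - ε) = algebraMap F K n) :
    Function.Injective fun c : F => (framePencil N P ε t c ∩ B) \ linf K := by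
  intro c c' hcc'
  obtain ⟨p, hp⟩ := projPt_mulVec_nonempty h.isUnit_det (v := algVec F ![1, 0, c])
    (fun h0 => one_ne_zero ((map_eq_zero (algebraMap F K)).1 (congrFun h0 0)))
  have hpinf : p ∉ linf K := (h.notMem_linf_iff hp).2 (Or.inl one_ne_zero)
  have hpc : p ∈ framePencil N P ε t c := by
    simp [h.mem_framePencil_algVec_iff hn hpinf hp]
  have hpB : p ∈ B := h.eq_mimg.symm ▸ mem_mimg_subplaneVecs_iff.2 ⟨_, hp⟩
  have hpc' : p ∈ framePencil N P ε t c' := (hcc'.le ⟨⟨hpc, hpB⟩, hpinf⟩).1.1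
  exact (h.existsUnique_mem_framePencil hrank t hpinf).unique hpc hpc'

lemma existsUnique_mem_framePencil_inter_sdiff_linf (h : IsAdaptedFrame F B T P mT N ε)
    (hrank : Module.finrank F K = 2) (t : F) {A : PP K 3} (hAB : A ∈ B) (hA : A ∉ linf K) :
    ∃! c : F, A ∈ (framePencil N P ε t c ∩ B) \ linf K := by
  simpa only [Set.mem_sdiff, Set.mem_inter_iff, hAB, hA, and_true, not_false_eq_true] using
    h.existsUnique_mem_framePencil hrank t hA

variable [Fintype F]

lemma card_image_framePencil (h : IsAdaptedFrame F B T P mT N ε)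
    (hrank : Module.finrank F K = 2) (hn : ε * (algebraMap F K t - ε) = algebraMap F K n) :
    (Finset.univ.image (framePencil N P ε t)).card = Fintype.card F :=
  Finset.card_image_of_injective _ <|
    (h.framePencil_inter_sdiff_linf_injective hrank hn).of_comp (f := fun X => (X ∩ B) \ linf K)

lemma card_image_traceConic (h : IsAdaptedFrame F B T P mT N ε)
    (hrank : Module.finrank F K = 2) (hn : ε * (algebraMap F K t - ε) = algebraMap F K n) :
    ((Finset.univ.erase 0).image (traceConic N t n)).card = Fintype.card F - 1 := by
  have hinj : Set.InjOn (traceConic N t n) ↑(Finset.univ.erase (0 : F)) := by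
    intro c hc c' hc' hcc'
    refine h.framePencil_inter_sdiff_linf_injective hrank hn ?_
    dsimp only
    rw [h.framePencil_inter_sdiff_linf hn (Finset.ne_of_mem_erase hc), hcc',
      ← h.framePencil_inter_sdiff_linf hn (Finset.ne_of_mem_erase hc')]
  rw [Finset.card_image_of_injOn hinj, Finset.card_erase_of_mem (Finset.mem_univ _),
    Finset.card_univ]

lemma image_framePencil_inter_sdiff_linf (h : IsAdaptedFrame F B T P mT N ε)
    (hn : ε * (algebraMap F K t - ε) = algebraMap F K n) {ℓ : Set (PP K 3)}
    (hℓ : ∀ p v, p ∈ projPt (N *ᵥ v) → (p ∈ ℓ ↔ v 2 = 0)) :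
    Finset.univ.image (fun c : F => (framePencil N P ε t c ∩ B) \ linf K) =
      insert ((mT ∪ B ∩ ℓ) \ linf K)
        (((Finset.univ.erase 0).image (traceConic N t n)).image (· \ linf K)) := by
  rw [Finset.image_image, ← Finset.insert_erase (Finset.mem_univ (0 : F)), Finset.image_insert,
    h.framePencil_zero_inter_sdiff_linf hn hℓ, Finset.erase_insert (Finset.notMem_erase _ _)]
  exact congrArg _ <| Finset.image_congr fun c hc =>
    h.framePencil_inter_sdiff_linf hn (Finset.ne_of_mem_erase hc)

end IsAdaptedFrame

end Traces

/-- For a Baer subplane `B` tangent to `ℓ∞` at `T̄`, a line `m` of `B` through `T̄`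
and a point `P̄ ∈ ℓ∞ \ {T̄}`, there are `q` `ℓ∞`-Baer pencils with vertex `P̄` partitioning
the affine points of `PG(2,q²)`, and partitioning the affine points of `B` into `q-1`
`F_q`-conics through `T̄` (whose `F_{q²}`-extensions pass through `P̄`) together with the
degenerate conic `m ∪ m_P`. -/
theorem statement_4
    {F K : Type} [Field F] [Field K] [Fintype F] [Fintype K] [Algebra F K]
    (q : ℕ) (hq : Fintype.card F = q) (hK : Fintype.card K = q ^ 2)
    (τ : K) (t0 t1 : F)
    (hτ : τ ^ 2 = algebraMap F K t1 * τ + algebraMap F K t0)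
    (hτF : τ ∉ Set.range (algebraMap F K))
    (c0 c1 : K → F)
    (hc : ∀ x : K, x = algebraMap F K (c0 x) + algebraMap F K (c1 x) * τ)
    (hq4 : 4 ≤ q)
    (B : Set (PP K 3)) (hB : IsBaerSubplane F B)
    (T : PP K 3) (hT : B ∩ linf K = {T})
    (m : Set (PP K 3)) (hm : IsLineOf q B m) (hTm : T ∈ m)
    (P : PP K 3) (hP : P ∈ linf K) (hPT : P ≠ T) :
    ∃ mP ℓP : Set (PP K 3), IsLineOfExt q B mP ℓP ∧ P ∈ ℓP ∧
    ∃ (Ks : Finset (Set (PP K 3))) (Cs : Finset (Set (PP K 3)))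
      (cells : Finset (Set (PP K 3))),
      cells = insert ((m ∪ mP) \ linf K) (Cs.image (fun C => C \ linf K)) ∧
      Ks.card = q ∧
      (∀ 𝒦 ∈ Ks, IsLinfBaerPencil F 𝒦 P) ∧
      (∀ A : PP K 3, A ∉ linf K → ∃! 𝒦, 𝒦 ∈ Ks ∧ A ∈ 𝒦) ∧
      Cs.card = q - 1 ∧
      (∀ C ∈ Cs, IsFqConic F C ∧ C ⊆ B ∧ T ∈ C ∧
        ∀ D : Set (PP K 3), IsFq2Conic D → C ⊆ D → P ∈ D) ∧
      (∀ A ∈ B, A ∉ linf K → ∃! c, c ∈ cells ∧ A ∈ c) ∧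
      (∀ c ∈ cells, c ⊆ B \ linf K) ∧
      (∀ 𝒦 ∈ Ks, ((𝒦 ∩ B) \ linf K) ∈ cells) ∧
      (∀ c ∈ cells, ∃ 𝒦 ∈ Ks, c = (𝒦 ∩ B) \ linf K) := by
  subst hq
  have hrank := finrank_eq_two_of_card_eq_sq hK
  obtain ⟨N, ε, h⟩ := exists_isAdaptedFrame hrank Fintype.card_pos hB hT hm hTm hP hPT
  obtain ⟨t, n, hn⟩ := exists_mul_sub_eq hrank h.notMem_range
  have hn0 := h.ne_zero_of_mul_sub_eq hn
  obtain ⟨ℓP, hℓP, hmemℓP⟩ := exists_isLineOfExt (F := F) h.isUnit_det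
  have hF : 4 ≤ (Set.range (algebraMap F K)).encard := by
    rw [encard_range_algebraMap]
    exact_mod_cast hq4
  refine ⟨B ∩ ℓP, ℓP, h.eq_mimg ▸ hℓP, (hmemℓP P _ h.P_mem).2 rfl,
    Finset.univ.image (framePencil N P ε t), (Finset.univ.erase 0).image (traceConic N t n), _,
    h.image_framePencil_inter_sdiff_linf hn hmemℓP, h.card_image_framePencil hrank hn, ?_,
    fun A hA => existsUnique_mem_image_univ (h.existsUnique_mem_framePencil hrank t hA),
    h.card_image_traceConic hrank hn, ?_,
    fun A hAB hA => existsUnique_mem_image_univ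
      (h.existsUnique_mem_framePencil_inter_sdiff_linf hrank t hAB hA), ?_, ?_, ?_⟩ <;>
    refine Finset.forall_mem_image.2 fun c hc => ?_
  · exact h.isLinfBaerPencil t c
  · have hc0 : c ≠ 0 := Finset.ne_of_mem_erase hc
    exact ⟨h.isFqConic_traceConic hn0 hc0, h.traceConic_subset hn0 hc0,
      h.T_mem_traceConic hn0 hc0, fun D => h.P_mem_of_traceConic_subset hn hF hc0⟩
  · exact Set.sdiff_subset_sdiff_left Set.inter_subset_right
  · exact Finset.mem_image_of_mem _ hc
  · exact ⟨_, Finset.mem_image_of_mem _ hc, rfl⟩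

end BaerConics
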